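/- arXiv:2309.03515 — 3 statements merged into one kernel-verified Lean document; each statement's English description precedes it below -/
import Mathlib

section
/- Let n ≥ 2, a ∈ 𝔹ⁿ \ {0}, c > 0. For t ∈ (0, |a|) put x_t = t·a/|a| and y_t = −x_t. Then lim_{t→0⁺} h_{𝔹ⁿ,c}(σ_a(x_t), σ_a(y_t)) / h_{𝔹ⁿ,c}(x_t, y_t) = 1 + |a|. Consequently, the constant 1 + |a| in the Lipschitz bound h_{𝔹ⁿ,c}(σ_a(x), σ_a(y)) ≤ (1+|a|)·h_{𝔹ⁿ,c}(x, y) is best possible. -/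
noncomputable section

open Real Filter

/-- The hyperbolic-type metric `h_{𝔹ⁿ,c}` on the unit ball. -/
def hB {n : ℕ} (c : ℝ) (x y : EuclideanSpace ℝ (Fin n)) : ℝ :=
  Real.log (1 + c * ‖x - y‖ / Real.sqrt ((1 - ‖x‖) * (1 - ‖y‖)))

/-- The n-th (last) coordinate of a point of `ℝⁿ`. -/
def lastCoord {n : ℕ} (x : EuclideanSpace ℝ (Fin n)) : ℝ :=
  if h : 0 < n then x ⟨n - 1, Nat.sub_lt h one_pos⟩ else 0

/-- The hyperbolic-type metric `h_{ℍⁿ,c}` on the upper half space. -/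
def hH {n : ℕ} (c : ℝ) (x y : EuclideanSpace ℝ (Fin n)) : ℝ :=
  Real.log (1 + c * ‖x - y‖ / Real.sqrt (lastCoord x * lastCoord y))

/-- The hyperbolic-type metric `h_{𝔹ⁿ\{p},c}` on the punctured unit ball. -/
def hP {n : ℕ} (c : ℝ) (p x y : EuclideanSpace ℝ (Fin n)) : ℝ :=
  Real.log (1 + c * ‖x - y‖ /
    Real.sqrt (min ‖x - p‖ (1 - ‖x‖) * min ‖y - p‖ (1 - ‖y‖)))

/-- The inversion `σ_a` in the sphere `S^{n-1}(a*, r)`, `a* = a/|a|²`, `r² = 1/|a|² - 1`. -/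
def sigmaInv {n : ℕ} (a x : EuclideanSpace ℝ (Fin n)) : EuclideanSpace ℝ (Fin n) :=
  (‖a‖ ^ 2)⁻¹ • a +
    (((‖a‖ ^ 2)⁻¹ - 1) / ‖x - (‖a‖ ^ 2)⁻¹ • a‖ ^ 2) • (x - (‖a‖ ^ 2)⁻¹ • a)

/-- The last standard basis vector `eₙ` of `ℝⁿ`. -/
def eLast (n : ℕ) : EuclideanSpace ℝ (Fin n) :=
  if h : 0 < n then EuclideanSpace.single ⟨n - 1, Nat.sub_lt h one_pos⟩ 1 else 0

/-- The first standard basis vector `e₁` of `ℝⁿ`. -/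
def eFirst (n : ℕ) : EuclideanSpace ℝ (Fin n) :=
  if h : 0 < n then EuclideanSpace.single ⟨0, h⟩ 1 else 0

/-- The inversion `σ` in the sphere `S^{n-1}(-eₙ, √2)`, mapping `𝔹ⁿ` onto `ℍⁿ`. -/
def sigmaBH {n : ℕ} (x : EuclideanSpace ℝ (Fin n)) : EuclideanSpace ℝ (Fin n) :=
  -eLast n + (2 / ‖x + eLast n‖ ^ 2) • (x + eLast n)

/-!
Let `s(x, y) = |x - y| / √((1 - |x|²)(1 - |y|²)) = sinh (ρ(x, y) / 2)`, where `ρ` is the hyperbolic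
metric of `𝔹ⁿ`. The Möbius map `σ_a` preserves `s`: with `k(x) = r² / |x - a*|²` one has
`1 - |σ_a x|² = k(x) (1 - |x|²)` and `|σ_a x - σ_a y|² = k(x) k(y) |x - y|²`. Since `1 - |x|²` and
`1 - |x|` differ by the factor `1 + |x|`, `h_c(x, y) ~ c (1 + |p|) s(x, y)` as `x, y → p`. Hence
`h_c(σ_a x, σ_a y) / h_c(x, y) → (1 + |σ_a p|) / (1 + |p|)` however `x ≠ y` tend to `p`; at `p = 0`
this limit is `1 + |a|`.
-/

open Asymptotics Topology

theorem isEquivalent_log_one_add : (fun u : ℝ ↦ log (1 + u)) ~[𝓝 0] id := by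
  have h : HasDerivAt (fun u : ℝ ↦ log (1 + u)) 1 0 := by
    simpa using ((hasDerivAt_id (0 : ℝ)).const_add 1).log (by simp)
  simpa [IsEquivalent] using! h.isLittleO

section NormedSpace

variable {E : Type*} [NormedAddCommGroup E] {p x y : E}

/-- The quantity `sinh (ρ(x, y) / 2)`, where `ρ` is the hyperbolic metric of the Euclidean unit ball
with density `2 / (1 - |x|²)`. It is the Möbius invariant to which `hB` is compared. -/
def sinhHalfDist (x y : E) : ℝ :=
  ‖x - y‖ / √((1 - ‖x‖ ^ 2) * (1 - ‖y‖ ^ 2))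

theorem one_sub_norm_sq_pos (hx : ‖x‖ < 1) : 0 < 1 - ‖x‖ ^ 2 :=
  sub_pos.2 (pow_lt_one₀ (norm_nonneg x) hx two_ne_zero)

theorem sinhHalfDist_pos (hx : ‖x‖ < 1) (hy : ‖y‖ < 1) (hxy : x ≠ y) : 0 < sinhHalfDist x y :=
  div_pos (norm_pos_iff.2 (sub_ne_zero.2 hxy))
    (sqrt_pos.2 (mul_pos (one_sub_norm_sq_pos hx) (one_sub_norm_sq_pos hy)))

theorem tendsto_sinhHalfDist_diagonal (hp : ‖p‖ < 1) :
    Tendsto (fun q : E × E ↦ sinhHalfDist q.1 q.2) (𝓝 (p, p)) (𝓝 0) := by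
  have hsqrt : √((1 - ‖p‖ ^ 2) * (1 - ‖p‖ ^ 2)) ≠ 0 :=
    (sqrt_pos.2 (mul_pos (one_sub_norm_sq_pos hp) (one_sub_norm_sq_pos hp))).ne'
  have hcont : ContinuousAt (fun q : E × E ↦ sinhHalfDist q.1 q.2) (p, p) := by
    unfold sinhHalfDist
    fun_prop (disch := exact hsqrt)
  simpa [sinhHalfDist] using hcont.tendsto

theorem eventually_norm_lt_one_prod (hp : ‖p‖ < 1) :
    ∀ᶠ q : E × E in 𝓝 (p, p), ‖q.1‖ < 1 ∧ ‖q.2‖ < 1 :=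
  have h : ∀ᶠ x in 𝓝 p, ‖x‖ < 1 := continuous_norm.continuousAt.eventually_lt_const hp
  h.prod_nhds h

theorem tendsto_antipodal_nhdsWithin_compl_diagonal [NormedSpace ℝ E] {v : E} (hv : v ≠ 0) :
    Tendsto (fun t : ℝ ↦ (t • v, -(t • v))) (𝓝[≠] 0) (𝓝[(Set.diagonal E)ᶜ] (0, 0)) := by
  have : IsAddTorsionFree E := .of_isTorsionFree ℝ E
  refine tendsto_nhdsWithin_iff.2 ⟨?_, ?_⟩
  · have hcont : Continuous (fun t : ℝ ↦ (t • v, -(t • v))) := by fun_prop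
    simpa using (hcont.tendsto 0).mono_left nhdsWithin_le_nhds
  · filter_upwards [self_mem_nhdsWithin] with t ht
    exact self_ne_neg.2 (smul_ne_zero ht hv)

end NormedSpace

variable {n : ℕ} {a p x y : EuclideanSpace ℝ (Fin n)}

theorem hB_eq_log_sinhHalfDist (c : ℝ) (x y : EuclideanSpace ℝ (Fin n)) :
    hB c x y = log (1 + c * √((1 + ‖x‖) * (1 + ‖y‖)) * sinhHalfDist x y) := by
  have hpos : 0 < (1 + ‖x‖) * (1 + ‖y‖) := by positivity
  have hfactor : (1 - ‖x‖ ^ 2) * (1 - ‖y‖ ^ 2) =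
      ((1 - ‖x‖) * (1 - ‖y‖)) * ((1 + ‖x‖) * (1 + ‖y‖)) := by ring
  have hsqrt : √((1 + ‖x‖) * (1 + ‖y‖)) ≠ 0 := (sqrt_pos.2 hpos).ne'
  rw [hB, sinhHalfDist, hfactor, sqrt_mul' _ hpos.le]
  field_simp

theorem hB_isEquivalent_sinhHalfDist (hp : ‖p‖ < 1) (c : ℝ) :
    (fun q : _ × _ ↦ hB c q.1 q.2) ~[𝓝 (p, p)]
      fun q ↦ c * (1 + ‖p‖) * sinhHalfDist q.1 q.2 := by
  have hfactor : Tendsto (fun q : EuclideanSpace ℝ (Fin n) × EuclideanSpace ℝ (Fin n) ↦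
      √((1 + ‖q.1‖) * (1 + ‖q.2‖))) (𝓝 (p, p)) (𝓝 (1 + ‖p‖)) := by
    have hcont : Continuous (fun q : EuclideanSpace ℝ (Fin n) × EuclideanSpace ℝ (Fin n) ↦
        √((1 + ‖q.1‖) * (1 + ‖q.2‖))) := by fun_prop
    simpa [sqrt_mul_self (by positivity : 0 ≤ 1 + ‖p‖)] using hcont.tendsto (p, p)
  have hfactor_equiv := (isEquivalent_const_iff_tendsto (by positivity)).2 hfactor
  have harg := (hfactor.const_mul c).mul (tendsto_sinhHalfDist_diagonal hp)
  rw [mul_zero] at harg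
  simp only [hB_eq_log_sinhHalfDist]
  exact (isEquivalent_log_one_add.comp_tendsto harg).trans
    ((IsEquivalent.refl.mul hfactor_equiv).mul IsEquivalent.refl)

/-- The center `a* = a / |a|²` of the sphere in which `sigmaInv a` inverts; for `a = 0` it takes the
junk value `0`. -/
def sigmaCenter (a : EuclideanSpace ℝ (Fin n)) : EuclideanSpace ℝ (Fin n) :=
  (‖a‖ ^ 2)⁻¹ • a

theorem norm_sigmaCenter (a : EuclideanSpace ℝ (Fin n)) : ‖sigmaCenter a‖ = ‖a‖⁻¹ := by
  rcases eq_or_ne a 0 with rfl | ha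
  · simp [sigmaCenter]
  · have : ‖a‖ ≠ 0 := norm_ne_zero_iff.2 ha
    rw [sigmaCenter, norm_smul, norm_inv, norm_pow, norm_norm]
    field_simp

theorem ne_sigmaCenter (ha : ‖a‖ ≤ 1) (ha0 : a ≠ 0) (hx : ‖x‖ < 1) : x ≠ sigmaCenter a := by
  rintro rfl
  rw [norm_sigmaCenter] at hx
  exact hx.not_ge ((one_le_inv₀ (norm_pos_iff.2 ha0)).2 ha)

theorem sigma_radius_sq_pos (ha : ‖a‖ < 1) (ha0 : a ≠ 0) : 0 < (‖a‖ ^ 2)⁻¹ - 1 :=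
  sub_pos.2 ((one_lt_inv₀ (pow_pos (norm_pos_iff.2 ha0) 2)).2
    (pow_lt_one₀ (norm_nonneg a) ha two_ne_zero))

theorem sigmaInv_eq_inversion (hr : 0 ≤ (‖a‖ ^ 2)⁻¹ - 1) :
    sigmaInv a = EuclideanGeometry.inversion (sigmaCenter a) √((‖a‖ ^ 2)⁻¹ - 1) := by
  funext x
  rw [EuclideanGeometry.inversion, div_pow, sq_sqrt hr, dist_eq_norm, vsub_eq_sub,
    vadd_eq_add, add_comm]
  rfl

theorem norm_sigmaInv_sub_sigmaInv (hr : 0 ≤ (‖a‖ ^ 2)⁻¹ - 1) (hx : x ≠ sigmaCenter a)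
    (hy : y ≠ sigmaCenter a) :
    ‖sigmaInv a x - sigmaInv a y‖ =
      ((‖a‖ ^ 2)⁻¹ - 1) / (‖x - sigmaCenter a‖ * ‖y - sigmaCenter a‖) * ‖x - y‖ := by
  rw [← dist_eq_norm, sigmaInv_eq_inversion hr,
    EuclideanGeometry.dist_inversion_inversion hx hy, sq_sqrt hr]
  simp only [dist_eq_norm]

theorem one_sub_norm_sigmaInv_sq (hx : x ≠ sigmaCenter a) :
    1 - ‖sigmaInv a x‖ ^ 2 =
      ((‖a‖ ^ 2)⁻¹ - 1) / ‖x - sigmaCenter a‖ ^ 2 * (1 - ‖x‖ ^ 2) := by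
  have hsigma : sigmaInv a x = sigmaCenter a +
      (((‖a‖ ^ 2)⁻¹ - 1) / ‖x - sigmaCenter a‖ ^ 2) • (x - sigmaCenter a) := rfl
  have hxsq : ‖x‖ ^ 2 = ‖sigmaCenter a‖ ^ 2 + 2 * inner ℝ (sigmaCenter a) (x - sigmaCenter a) +
      ‖x - sigmaCenter a‖ ^ 2 := by
    rw [← norm_add_sq_real, add_sub_cancel]
  have hd : ‖x - sigmaCenter a‖ ≠ 0 := norm_ne_zero_iff.2 (sub_ne_zero.2 hx)
  rw [hsigma, norm_add_sq_real, inner_smul_right, norm_smul, mul_pow, norm_eq_abs, sq_abs, hxsq,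
    norm_sigmaCenter, inv_pow]
  generalize (‖a‖ ^ 2)⁻¹ = b
  field_simp
  ring

theorem norm_sigmaInv_lt_one (ha : ‖a‖ < 1) (ha0 : a ≠ 0) (hx : ‖x‖ < 1) :
    ‖sigmaInv a x‖ < 1 := by
  have hxa := ne_sigmaCenter ha.le ha0 hx
  have hpos : 0 < 1 - ‖sigmaInv a x‖ ^ 2 := by
    rw [one_sub_norm_sigmaInv_sq hxa]
    exact mul_pos (div_pos (sigma_radius_sq_pos ha ha0)
      (pow_pos (norm_pos_iff.2 (sub_ne_zero.2 hxa)) 2)) (one_sub_norm_sq_pos hx)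
  exact (sq_lt_one_iff₀ (norm_nonneg _)).1 (sub_pos.1 hpos)

theorem continuousAt_sigmaInv (hx : x ≠ sigmaCenter a) : ContinuousAt (sigmaInv a) x := by
  have hd : ‖x - (‖a‖ ^ 2)⁻¹ • a‖ ^ 2 ≠ 0 :=
    pow_ne_zero 2 (norm_ne_zero_iff.2 (sub_ne_zero.2 hx))
  unfold sigmaInv
  fun_prop (disch := exact hd)

theorem sigmaInv_zero (a : EuclideanSpace ℝ (Fin n)) : sigmaInv a 0 = a := by
  rcases eq_or_ne a 0 with rfl | ha0
  · simp [sigmaInv]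
  · have : ‖a‖ ≠ 0 := norm_ne_zero_iff.2 ha0
    rw [sigmaInv, zero_sub, norm_neg, ← sigmaCenter, norm_sigmaCenter, sigmaCenter, smul_neg,
      smul_smul, ← sub_eq_add_neg, ← sub_smul]
    convert one_smul ℝ a using 2
    field_simp
    ring

theorem sinhHalfDist_sigmaInv (ha : ‖a‖ < 1) (ha0 : a ≠ 0) (hx : ‖x‖ < 1) (hy : ‖y‖ < 1) :
    sinhHalfDist (sigmaInv a x) (sigmaInv a y) = sinhHalfDist x y := by
  have hxa := ne_sigmaCenter ha.le ha0 hx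
  have hya := ne_sigmaCenter ha.le ha0 hy
  have hr := sigma_radius_sq_pos ha ha0
  set k := ((‖a‖ ^ 2)⁻¹ - 1) / (‖x - sigmaCenter a‖ * ‖y - sigmaCenter a‖) with hk
  have hkpos : 0 < k := div_pos hr
    (mul_pos (norm_pos_iff.2 (sub_ne_zero.2 hxa)) (norm_pos_iff.2 (sub_ne_zero.2 hya)))
  have hprod : (1 - ‖sigmaInv a x‖ ^ 2) * (1 - ‖sigmaInv a y‖ ^ 2) =
      k ^ 2 * ((1 - ‖x‖ ^ 2) * (1 - ‖y‖ ^ 2)) := by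
    rw [one_sub_norm_sigmaInv_sq hxa, one_sub_norm_sigmaInv_sq hya]
    ring
  rw [sinhHalfDist, sinhHalfDist, norm_sigmaInv_sub_sigmaInv hr.le hxa hya, hprod, ← hk,
    sqrt_mul (sq_nonneg k), sqrt_sq hkpos.le, mul_div_mul_left _ _ hkpos.ne']

theorem hB_sigmaInv_isEquivalent_sinhHalfDist (ha : ‖a‖ < 1) (ha0 : a ≠ 0) (hp : ‖p‖ < 1)
    (c : ℝ) :
    (fun q : _ × _ ↦ hB c (sigmaInv a q.1) (sigmaInv a q.2)) ~[𝓝 (p, p)]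
      fun q ↦ c * (1 + ‖sigmaInv a p‖) * sinhHalfDist q.1 q.2 := by
  have hcont : Tendsto (sigmaInv a) (𝓝 p) (𝓝 (sigmaInv a p)) :=
    continuousAt_sigmaInv (ne_sigmaCenter ha.le ha0 hp)
  have hequiv := (hB_isEquivalent_sinhHalfDist (norm_sigmaInv_lt_one ha ha0 hp) c).comp_tendsto
    (hcont.prodMap_nhds hcont)
  refine hequiv.congr_right ?_
  filter_upwards [eventually_norm_lt_one_prod hp] with q ⟨hq₁, hq₂⟩
  simp only [Function.comp_apply, Prod.map_fst, Prod.map_snd,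
    sinhHalfDist_sigmaInv ha ha0 hq₁ hq₂]

theorem mobius_ball_constant_sharp_general (ha : ‖a‖ < 1) (ha0 : a ≠ 0) (hp : ‖p‖ < 1) {c : ℝ}
    (hc : c ≠ 0) :
    Tendsto (fun q : _ × _ ↦ hB c (sigmaInv a q.1) (sigmaInv a q.2) / hB c q.1 q.2)
      (𝓝[(Set.diagonal (EuclideanSpace ℝ (Fin n)))ᶜ] (p, p))
      (𝓝 ((1 + ‖sigmaInv a p‖) / (1 + ‖p‖))) := by
  have hratio := ((hB_sigmaInv_isEquivalent_sinhHalfDist ha ha0 hp c).div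
    (hB_isEquivalent_sinhHalfDist hp c)).mono
      (nhdsWithin_le_nhds (s := (Set.diagonal (EuclideanSpace ℝ (Fin n)))ᶜ))
  refine (hratio.congr_right ?_).tendsto_const
  filter_upwards [self_mem_nhdsWithin, nhdsWithin_le_nhds (eventually_norm_lt_one_prod hp)]
    with q hq ⟨hq₁, hq₂⟩
  have hs : sinhHalfDist q.1 q.2 ≠ 0 := (sinhHalfDist_pos hq₁ hq₂ hq).ne'
  rw [Pi.div_apply, Function.const_apply, mul_div_mul_right _ _ hs, mul_div_mul_left _ _ hc]

theorem mobius_ball_constant_sharp (n : ℕ) (hn : 2 ≤ n)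
    (a : EuclideanSpace ℝ (Fin n)) (haB : ‖a‖ < 1) (ha0 : a ≠ 0)
    (c : ℝ) (hc : 0 < c) :
    Filter.Tendsto
      (fun t : ℝ =>
        hB c (sigmaInv a ((t / ‖a‖) • a)) (sigmaInv a (-((t / ‖a‖) • a))) /
          hB c ((t / ‖a‖) • a) (-((t / ‖a‖) • a)))
      (nhdsWithin 0 (Set.Ioo 0 ‖a‖)) (nhds (1 + ‖a‖)) := by
  have hv : ‖a‖⁻¹ • a ≠ 0 := smul_ne_zero (inv_ne_zero (norm_ne_zero_iff.2 ha0)) ha0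
  have hpairs := (tendsto_antipodal_nhdsWithin_compl_diagonal hv).mono_left
    (nhdsWithin_mono 0 fun _ (ht : _ ∈ Set.Ioo 0 ‖a‖) ↦ ht.1.ne')
  simpa [Function.comp_def, smul_smul, div_eq_mul_inv, sigmaInv_zero] using
    (mobius_ball_constant_sharp_general haB ha0 (p := 0) (by simp) hc.ne').comp hpairs
end
end

section
/- Let n ≥ 2 and let σ(x) = −eₙ + 2(x + eₙ)/|x + eₙ|² be the inversion in the sphere S^{n−1}(−eₙ, √2), which maps 𝔹ⁿ onto ℍⁿ. Then for all x, y ∈ 𝔹ⁿ and all c > 0: h_{𝔹ⁿ,c}(x, y) ≤ h_{ℍⁿ,c}(σ(x), σ(y)) ≤ 2·h_{𝔹ⁿ,c}(x, y). -/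
noncomputable section

open Real Filter

/-!
Both metrics are increasing functions of `δ(x, y) = |x - y| / √(d(x) d(y))`, where `d` is the
distance to the boundary of the domain. The inversion `σ` satisfies
`|σ x - σ y| = 2 |x - y| / (|x + eₙ| |y + eₙ|)` and `(σ x)ₙ = (1 - |x|²) / |x + eₙ|²`, so the
factors `|x + eₙ|`, `|y + eₙ|` cancel and `σ` multiplies `δ` by exactly
`2 / √((1 + |x|)(1 + |y|)) ∈ [1, 2]`. Bernoulli's inequality `log (1 + k t) ≤ k log (1 + t)` then
gives the upper bound, and monotonicity the lower one.
-/

open EuclideanGeometry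
open scoped RealInnerProductSpace

theorem log_one_add_mul_le {k t : ℝ} (hk : 1 ≤ k) (ht : 0 < 1 + k * t) :
    log (1 + k * t) ≤ k * log (1 + t) := by
  have ht' : 0 < 1 + t := by nlinarith
  calc log (1 + k * t) ≤ log ((1 + t) ^ k) :=
        log_le_log ht (one_add_mul_self_le_rpow_one_add (by linarith) hk)
    _ = k * log (1 + t) := log_rpow ht' k

section ScaledDist

variable {X Y : Type*} [PseudoMetricSpace X] [PseudoMetricSpace Y]

/-- The distance of two points relative to the geometric mean of their weights `d x` and `d y`. In a
domain, `d` is the distance to the boundary. -/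
def scaledDist (d : X → ℝ) (x y : X) : ℝ :=
  dist x y / √(d x * d y)

/-- The hyperbolic-type metric `h_{D,c}` of a domain `D`, which enters only through its
boundary distance function `d`. -/
def hyperbolicTypeDist (d : X → ℝ) (c : ℝ) (x y : X) : ℝ :=
  log (1 + c * scaledDist d x y)

variable {d : X → ℝ} {d' : Y → ℝ} {c : ℝ} {x y : X} {x' y' : Y}

theorem scaledDist_nonneg (d : X → ℝ) (x y : X) : 0 ≤ scaledDist d x y :=
  div_nonneg dist_nonneg (sqrt_nonneg _)

theorem hyperbolicTypeDist_le_of_scaledDist_le (hc : 0 ≤ c)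
    (h : scaledDist d x y ≤ scaledDist d' x' y') :
    hyperbolicTypeDist d c x y ≤ hyperbolicTypeDist d' c x' y' := by
  have := scaledDist_nonneg d x y
  unfold hyperbolicTypeDist
  gcongr

theorem hyperbolicTypeDist_le_mul_of_scaledDist_le_mul {k : ℝ} (hc : 0 ≤ c) (hk : 1 ≤ k)
    (h : scaledDist d' x' y' ≤ k * scaledDist d x y) :
    hyperbolicTypeDist d' c x' y' ≤ k * hyperbolicTypeDist d c x y := by
  have hδ := scaledDist_nonneg d x y
  have hδ' := scaledDist_nonneg d' x' y'
  calc log (1 + c * scaledDist d' x' y')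
      ≤ log (1 + c * (k * scaledDist d x y)) := by gcongr
    _ = log (1 + k * (c * scaledDist d x y)) := by rw [mul_left_comm]
    _ ≤ k * log (1 + c * scaledDist d x y) := log_one_add_mul_le hk (by positivity)

end ScaledDist

theorem ne_neg_of_norm_lt {E : Type*} [SeminormedAddCommGroup E] {x y : E} (h : ‖x‖ < ‖y‖) :
    x ≠ -y :=
  ne_of_apply_ne norm (by rw [norm_neg]; exact h.ne)

theorem norm_add_ne_zero_of_ne_neg {E : Type*} [NormedAddCommGroup E] {x y : E} (h : x ≠ -y) :
    ‖x + y‖ ≠ 0 := by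
  rwa [norm_ne_zero_iff, ne_eq, add_eq_zero_iff_eq_neg]

section Inversion

variable {E : Type*} [NormedAddCommGroup E] [InnerProductSpace ℝ E] {e x y : E}

theorem inner_inversion_neg_sqrt_two (he : ‖e‖ = 1) (hx : x ≠ -e) :
    ⟪inversion (-e) √2 x, e⟫ = (1 - ‖x‖ ^ 2) / ‖x + e‖ ^ 2 := by
  have hxe : ‖x + e‖ ≠ 0 := norm_add_ne_zero_of_ne_neg hx
  have hsq : ‖x + e‖ ^ 2 = ‖x‖ ^ 2 + 2 * ⟪x, e⟫ + 1 := by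
    rw [norm_add_sq_real, he, one_pow]
  have hinner : ⟪inversion (-e) √2 x, e⟫ = 2 / ‖x + e‖ ^ 2 * (⟪x, e⟫ + 1) - 1 := by
    simp only [inversion, dist_eq_norm, vsub_eq_sub, sub_neg_eq_add, vadd_eq_add, inner_add_left,
      inner_neg_left, real_inner_smul_left, real_inner_self_eq_norm_sq, he, div_pow,
      sq_sqrt zero_le_two]
    ring
  rw [hinner]
  field_simp
  linear_combination -hsq

theorem scaledDist_inversion (he : ‖e‖ = 1) (hx : x ≠ -e) (hy : y ≠ -e) :
    scaledDist (⟪·, e⟫) (inversion (-e) √2 x) (inversion (-e) √2 y) =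
      2 / √((1 + ‖x‖) * (1 + ‖y‖)) * scaledDist (1 - ‖·‖) x y := by
  have hxe : ‖x + e‖ ≠ 0 := norm_add_ne_zero_of_ne_neg hx
  have hye : ‖y + e‖ ≠ 0 := norm_add_ne_zero_of_ne_neg hy
  have hdist : dist (inversion (-e) √2 x) (inversion (-e) √2 y) =
      2 / (‖x + e‖ * ‖y + e‖) * dist x y := by
    rw [dist_inversion_inversion hx hy, sq_sqrt zero_le_two]
    simp only [dist_eq_norm, sub_neg_eq_add]
  have hsqrt : √((1 - ‖x‖ ^ 2) / ‖x + e‖ ^ 2 * ((1 - ‖y‖ ^ 2) / ‖y + e‖ ^ 2)) =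
      √((1 - ‖x‖) * (1 - ‖y‖)) * √((1 + ‖x‖) * (1 + ‖y‖)) / (‖x + e‖ * ‖y + e‖) := by
    rw [← sqrt_mul' _ (by positivity), div_mul_div_comm, ← mul_pow, sqrt_div' _ (by positivity),
      sqrt_sq (by positivity)]
    ring_nf
  simp only [scaledDist, inner_inversion_neg_sqrt_two he hx, inner_inversion_neg_sqrt_two he hy,
    hdist, hsqrt]
  field_simp

theorem scaledDist_le_scaledDist_inversion (he : ‖e‖ = 1) (hx : ‖x‖ < 1) (hy : ‖y‖ < 1) :
    scaledDist (1 - ‖·‖) x y ≤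
      scaledDist (⟪·, e⟫) (inversion (-e) √2 x) (inversion (-e) √2 y) := by
  have hfactor : 1 ≤ 2 / √((1 + ‖x‖) * (1 + ‖y‖)) := by
    rw [one_le_div (by positivity), sqrt_le_left zero_le_two]
    nlinarith [norm_nonneg x, norm_nonneg y]
  rw [scaledDist_inversion he (ne_neg_of_norm_lt (he ▸ hx)) (ne_neg_of_norm_lt (he ▸ hy))]
  exact le_mul_of_one_le_left (scaledDist_nonneg _ x y) hfactor

theorem scaledDist_inversion_le_two_mul (he : ‖e‖ = 1) (hx : x ≠ -e) (hy : y ≠ -e) :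
    scaledDist (⟪·, e⟫) (inversion (-e) √2 x) (inversion (-e) √2 y) ≤
      2 * scaledDist (1 - ‖·‖) x y := by
  have hfactor : 2 / √((1 + ‖x‖) * (1 + ‖y‖)) ≤ 2 := by
    refine div_le_self zero_le_two (one_le_sqrt.2 ?_)
    exact one_le_mul_of_one_le_of_one_le (by simp) (by simp)
  rw [scaledDist_inversion he hx hy]
  exact mul_le_mul_of_nonneg_right hfactor (scaledDist_nonneg _ x y)

theorem ball_to_halfspace_lipschitz_general (he : ‖e‖ = 1) (hx : ‖x‖ < 1) (hy : ‖y‖ < 1)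
    {c : ℝ} (hc : 0 ≤ c) :
    hyperbolicTypeDist (1 - ‖·‖) c x y ≤
        hyperbolicTypeDist (⟪·, e⟫) c (inversion (-e) √2 x) (inversion (-e) √2 y) ∧
      hyperbolicTypeDist (⟪·, e⟫) c (inversion (-e) √2 x) (inversion (-e) √2 y) ≤
        2 * hyperbolicTypeDist (1 - ‖·‖) c x y :=
  ⟨hyperbolicTypeDist_le_of_scaledDist_le hc (scaledDist_le_scaledDist_inversion he hx hy),
    hyperbolicTypeDist_le_mul_of_scaledDist_le_mul hc one_le_two <|
      scaledDist_inversion_le_two_mul he (ne_neg_of_norm_lt (he ▸ hx))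
        (ne_neg_of_norm_lt (he ▸ hy))⟩

end Inversion

section Coordinates

variable {n : ℕ}

theorem norm_eLast (hn : 0 < n) : ‖eLast n‖ = 1 := by
  simp [eLast, hn]

theorem lastCoord_eq_inner (x : EuclideanSpace ℝ (Fin n)) : lastCoord x = ⟪x, eLast n⟫ := by
  by_cases hn : 0 < n <;> simp [lastCoord, eLast, hn, EuclideanSpace.inner_single_right]

theorem sigmaBH_eq_inversion (x : EuclideanSpace ℝ (Fin n)) :
    sigmaBH x = inversion (-eLast n) √2 x := by
  simp only [sigmaBH, inversion, dist_eq_norm, vsub_eq_sub, sub_neg_eq_add, vadd_eq_add, div_pow,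
    sq_sqrt zero_le_two, add_comm]

theorem hB_eq_hyperbolicTypeDist (c : ℝ) (x y : EuclideanSpace ℝ (Fin n)) :
    hB c x y = hyperbolicTypeDist (1 - ‖·‖) c x y := by
  rw [hB, hyperbolicTypeDist, scaledDist, dist_eq_norm, mul_div_assoc]

theorem hH_eq_hyperbolicTypeDist (c : ℝ) (x y : EuclideanSpace ℝ (Fin n)) :
    hH c x y = hyperbolicTypeDist (⟪·, eLast n⟫) c x y := by
  rw [hH, hyperbolicTypeDist, scaledDist, dist_eq_norm, mul_div_assoc, lastCoord_eq_inner,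
    lastCoord_eq_inner]

end Coordinates

theorem ball_to_halfspace_lipschitz (n : ℕ) (hn : 2 ≤ n)
    (x y : EuclideanSpace ℝ (Fin n)) (hx : ‖x‖ < 1) (hy : ‖y‖ < 1)
    (c : ℝ) (hc : 0 < c) :
    hB c x y ≤ hH c (sigmaBH x) (sigmaBH y) ∧
      hH c (sigmaBH x) (sigmaBH y) ≤ 2 * hB c x y := by
  simp only [hB_eq_hyperbolicTypeDist, hH_eq_hyperbolicTypeDist, sigmaBH_eq_inversion]
  exact ball_to_halfspace_lipschitz_general (norm_eLast (by lia)) hx hy hc.le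
end
end

section
/- Let n ≥ 2, a ∈ 𝔹ⁿ \ {0}, and let σ_a be the inversion in the sphere S^{n−1}(a*, r). Then for all x, y ∈ 𝔹ⁿ: |σ_a(x) − σ_a(y)| / √((1 − |σ_a(x)|)(1 − |σ_a(y)|)) = (|x − y|/√((1 − |x|²)(1 − |y|²))) · √((1 + |x − a|/(|a|·|x − a*|))·(1 + |y − a|/(|a|·|y − a*|))). -/
noncomputable section

open Real Filter

/-!
With `a* = a / |a|²`, Ahlfors' bracket `[a, x] = |a| |x - a*|` satisfies
`[a, x]² = |x - a|² + (1 - |a|²) (1 - |x|²)`. The distance formula for inversions then reads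
`|σ x - σ y| = (1 - |a|²) |x - y| / ([a, x] [a, y])`. Since `σ a = 0`, taking `y = a` gives
`|σ x| = |x - a| / [a, x]`, hence `1 - |σ x|² = (1 - |a|²) (1 - |x|²) / [a, x]²`. The factors
`1 - |a|²` and `[a, ·]` cancel in `|x - y| / √((1 - |x|²) (1 - |y|²))`, which is therefore invariant
under `σ`; factoring `1 - |σ x|² = (1 - |σ x|) (1 + |σ x|)` accounts for the remaining square root.
-/

open EuclideanGeometry

theorem div_sqrt_one_sub_mul_one_sub {u v : ℝ} (hu : -1 < u) (hv : -1 < v) (t : ℝ) :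
    t / √((1 - u) * (1 - v)) =
      t / √((1 - u ^ 2) * (1 - v ^ 2)) * √((1 + u) * (1 + v)) := by
  have h_pos : 0 < (1 + u) * (1 + v) := mul_pos (by linarith) (by linarith)
  have h_factor : (1 - u ^ 2) * (1 - v ^ 2) = (1 - u) * (1 - v) * ((1 + u) * (1 + v)) := by ring
  rw [h_factor, sqrt_mul' _ h_pos.le, div_mul_eq_mul_div,
    mul_div_mul_right _ _ (sqrt_pos.2 h_pos).ne']

theorem sq_sqrt_inv_sq_sub_one {t : ℝ} (ht : 0 < t) (ht1 : t ≤ 1) :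
    √((t ^ 2)⁻¹ - 1) ^ 2 = (t ^ 2)⁻¹ - 1 :=
  sq_sqrt <| sub_nonneg.2 <| (one_le_inv₀ (pow_pos ht 2)).2 (pow_le_one₀ ht.le ht1)

theorem one_sub_sq_norm_pos {E : Type*} [SeminormedAddCommGroup E] {z : E} (hz : ‖z‖ < 1) :
    0 < 1 - ‖z‖ ^ 2 :=
  sub_pos.2 (pow_lt_one₀ (norm_nonneg z) hz two_ne_zero)

section NormedSpace

variable {E : Type*} [NormedAddCommGroup E] [NormedSpace ℝ E] {a x : E}

/-- The point `a*` symmetric to `a` with respect to the unit sphere, the center of `σ_a`. It is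
written as in `sigmaInv` rather than as `inversion 0 1 a`; note that `0* = 0`. -/
def symmPoint (a : E) : E := (‖a‖ ^ 2)⁻¹ • a

/-- Ahlfors' bracket `[a, x] = |a| |x - a*|`. With this encoding it is `0` at `a = 0`, whereas the
usual bracket extends continuously by `1` there. -/
def ahlforsBracket (a x : E) : ℝ := ‖a‖ * ‖x - symmPoint a‖

theorem norm_symmPoint (a : E) : ‖symmPoint a‖ = ‖a‖⁻¹ := by
  rcases eq_or_ne a 0 with rfl | ha
  · simp [symmPoint]
  · have : ‖a‖ ≠ 0 := norm_ne_zero_iff.2 ha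
    rw [symmPoint, norm_smul, norm_inv, norm_pow, norm_norm]
    field_simp

theorem ne_symmPoint_of_norm_le_one (ha : a ≠ 0) (ha1 : ‖a‖ < 1) (hx : ‖x‖ ≤ 1) :
    x ≠ symmPoint a := by
  rintro rfl
  rw [norm_symmPoint] at hx
  exact hx.not_gt ((one_lt_inv₀ (norm_pos_iff.2 ha)).2 ha1)

theorem ahlforsBracket_pos (ha : a ≠ 0) (hx : x ≠ symmPoint a) : 0 < ahlforsBracket a x :=
  mul_pos (norm_pos_iff.2 ha) (norm_pos_iff.2 (sub_ne_zero.2 hx))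

end NormedSpace

section InnerProductSpace

variable {V : Type*} [NormedAddCommGroup V] [InnerProductSpace ℝ V] {a x y : V}

theorem sq_ahlforsBracket (ha : a ≠ 0) (x : V) :
    ahlforsBracket a x ^ 2 = ‖x - a‖ ^ 2 + (1 - ‖a‖ ^ 2) * (1 - ‖x‖ ^ 2) := by
  have : ‖a‖ ≠ 0 := norm_ne_zero_iff.2 ha
  rw [ahlforsBracket, mul_pow, norm_sub_sq_real, norm_sub_sq_real, norm_symmPoint, symmPoint,
    inner_smul_right]
  field_simp
  ring

theorem ahlforsBracket_self (ha : a ≠ 0) (ha1 : ‖a‖ ≤ 1) : ahlforsBracket a a = 1 - ‖a‖ ^ 2 := by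
  have h_nonneg : 0 ≤ ahlforsBracket a a := mul_nonneg (norm_nonneg _) (norm_nonneg _)
  have h_sub_nonneg : 0 ≤ 1 - ‖a‖ ^ 2 := sub_nonneg.2 (pow_le_one₀ (norm_nonneg a) ha1)
  rw [← sq_eq_sq₀ h_nonneg h_sub_nonneg, sq_ahlforsBracket ha, sub_self, norm_zero]
  ring

/-- The inversion `σ_a` with center `a*` and radius `√(1 / |a|² - 1)`, which for `0 < |a| < 1`
preserves the unit ball and exchanges `a` with `0`. It is the analogue of `sigmaInv` in an arbitrary
real inner product space, expressed through Mathlib's `EuclideanGeometry.inversion`. -/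
def ballInversion (a : V) : V → V := inversion (symmPoint a) √((‖a‖ ^ 2)⁻¹ - 1)

theorem ballInversion_apply (ha : a ≠ 0) (ha1 : ‖a‖ ≤ 1) (x : V) :
    ballInversion a x =
      symmPoint a + (((‖a‖ ^ 2)⁻¹ - 1) / ‖x - symmPoint a‖ ^ 2) • (x - symmPoint a) := by
  rw [ballInversion, inversion, div_pow, sq_sqrt_inv_sq_sub_one (norm_pos_iff.2 ha) ha1,
    dist_eq_norm, vsub_eq_sub, vadd_eq_add, add_comm]

theorem norm_ballInversion_sub (ha : a ≠ 0) (ha1 : ‖a‖ ≤ 1) (hx : x ≠ symmPoint a)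
    (hy : y ≠ symmPoint a) :
    ‖ballInversion a x - ballInversion a y‖ =
      (1 - ‖a‖ ^ 2) / (ahlforsBracket a x * ahlforsBracket a y) * ‖x - y‖ := by
  have : ‖a‖ ≠ 0 := norm_ne_zero_iff.2 ha
  rw [← dist_eq_norm, ballInversion, dist_inversion_inversion hx hy,
    sq_sqrt_inv_sq_sub_one (norm_pos_iff.2 ha) ha1, ahlforsBracket, ahlforsBracket]
  simp only [dist_eq_norm]
  field_simp

theorem ballInversion_self (ha : a ≠ 0) (ha1 : ‖a‖ < 1) : ballInversion a a = 0 := by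
  have h_norm : ‖a‖ ≠ 0 := norm_ne_zero_iff.2 ha
  have h_sub : 1 - ‖a‖ ^ 2 ≠ 0 := (one_sub_sq_norm_pos ha1).ne'
  have h_dist : ‖a - symmPoint a‖ = (1 - ‖a‖ ^ 2) / ‖a‖ := by
    rw [← ahlforsBracket_self ha ha1.le, ahlforsBracket, mul_div_cancel_left₀ _ h_norm]
  rw [ballInversion_apply ha ha1.le, h_dist, symmPoint]
  match_scalars
  field_simp
  ring

theorem norm_ballInversion (ha : a ≠ 0) (ha1 : ‖a‖ < 1) (hx : x ≠ symmPoint a) :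
    ‖ballInversion a x‖ = ‖x - a‖ / ahlforsBracket a x := by
  have h_sub : 1 - ‖a‖ ^ 2 ≠ 0 := (one_sub_sq_norm_pos ha1).ne'
  have h_image := norm_ballInversion_sub ha ha1.le hx (ne_symmPoint_of_norm_le_one ha ha1 ha1.le)
  rw [ballInversion_self ha ha1, sub_zero, ahlforsBracket_self ha ha1.le] at h_image
  rw [h_image]
  field_simp

theorem one_sub_sq_norm_ballInversion (ha : a ≠ 0) (ha1 : ‖a‖ < 1) (hx : x ≠ symmPoint a) :
    1 - ‖ballInversion a x‖ ^ 2 = (1 - ‖a‖ ^ 2) * (1 - ‖x‖ ^ 2) / ahlforsBracket a x ^ 2 := by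
  have h_sq : ahlforsBracket a x ^ 2 ≠ 0 := pow_ne_zero 2 (ahlforsBracket_pos ha hx).ne'
  rw [norm_ballInversion ha ha1 hx, div_pow, one_sub_div h_sq, sq_ahlforsBracket ha,
    add_sub_cancel_left]

theorem norm_ballInversion_sub_div_sqrt (ha : a ≠ 0) (ha1 : ‖a‖ < 1) (hx : x ≠ symmPoint a)
    (hy : y ≠ symmPoint a) (hxy : 0 < (1 - ‖x‖ ^ 2) * (1 - ‖y‖ ^ 2)) :
    ‖ballInversion a x - ballInversion a y‖ /
        √((1 - ‖ballInversion a x‖ ^ 2) * (1 - ‖ballInversion a y‖ ^ 2)) =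
      ‖x - y‖ / √((1 - ‖x‖ ^ 2) * (1 - ‖y‖ ^ 2)) := by
  set c := (1 - ‖a‖ ^ 2) / (ahlforsBracket a x * ahlforsBracket a y) with c_def
  have c_pos : 0 < c :=
    div_pos (one_sub_sq_norm_pos ha1)
      (mul_pos (ahlforsBracket_pos ha hx) (ahlforsBracket_pos ha hy))
  have h_mul : (1 - ‖ballInversion a x‖ ^ 2) * (1 - ‖ballInversion a y‖ ^ 2) =
      (1 - ‖x‖ ^ 2) * (1 - ‖y‖ ^ 2) * c ^ 2 := by
    rw [one_sub_sq_norm_ballInversion ha ha1 hx, one_sub_sq_norm_ballInversion ha ha1 hy, c_def]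
    ring
  rw [norm_ballInversion_sub ha ha1.le hx hy, ← c_def, h_mul, sqrt_mul hxy.le, sqrt_sq c_pos.le,
    mul_comm c, mul_div_mul_right _ _ c_pos.ne']

theorem sigmaInv_ratio_identity_general (ha : a ≠ 0) (ha1 : ‖a‖ < 1) (hx : x ≠ symmPoint a)
    (hy : y ≠ symmPoint a) (hxy : 0 < (1 - ‖x‖ ^ 2) * (1 - ‖y‖ ^ 2)) :
    ‖ballInversion a x - ballInversion a y‖ /
        √((1 - ‖ballInversion a x‖) * (1 - ‖ballInversion a y‖)) =
      ‖x - y‖ / √((1 - ‖x‖ ^ 2) * (1 - ‖y‖ ^ 2)) *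
        √((1 + ‖x - a‖ / ahlforsBracket a x) * (1 + ‖y - a‖ / ahlforsBracket a y)) := by
  have neg_one_lt_norm (z : V) : -1 < ‖z‖ := neg_one_lt_zero.trans_le (norm_nonneg z)
  rw [div_sqrt_one_sub_mul_one_sub (neg_one_lt_norm _) (neg_one_lt_norm _),
    norm_ballInversion_sub_div_sqrt ha ha1 hx hy hxy, norm_ballInversion ha ha1 hx,
    norm_ballInversion ha ha1 hy]

end InnerProductSpace

theorem sigmaInv_eq_ballInversion {n : ℕ} {a : EuclideanSpace ℝ (Fin n)} (ha : a ≠ 0)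
    (ha1 : ‖a‖ ≤ 1) : sigmaInv a = ballInversion a :=
  funext fun x => (ballInversion_apply ha ha1 x).symm

theorem sigmaInv_ratio_identity (n : ℕ) (hn : 2 ≤ n)
    (a : EuclideanSpace ℝ (Fin n)) (haB : ‖a‖ < 1) (ha0 : a ≠ 0)
    (x y : EuclideanSpace ℝ (Fin n)) (hx : ‖x‖ < 1) (hy : ‖y‖ < 1) :
    ‖sigmaInv a x - sigmaInv a y‖ /
        Real.sqrt ((1 - ‖sigmaInv a x‖) * (1 - ‖sigmaInv a y‖)) =
      ‖x - y‖ / Real.sqrt ((1 - ‖x‖ ^ 2) * (1 - ‖y‖ ^ 2)) *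
        Real.sqrt ((1 + ‖x - a‖ / (‖a‖ * ‖x - (‖a‖ ^ 2)⁻¹ • a‖)) *
          (1 + ‖y - a‖ / (‖a‖ * ‖y - (‖a‖ ^ 2)⁻¹ • a‖))) := by
  rw [sigmaInv_eq_ballInversion ha0 haB.le]
  exact sigmaInv_ratio_identity_general ha0 haB (ne_symmPoint_of_norm_le_one ha0 haB hx.le)
    (ne_symmPoint_of_norm_le_one ha0 haB hy.le)
    (mul_pos (one_sub_sq_norm_pos hx) (one_sub_sq_norm_pos hy))
end
end
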